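/- Under the quadratic predictor–corrector setup (see context), there exist h₀ > 0 and a constant C, both depending only on α, M, L, T, y and f but not on the grid, such that for all 0 < h ≤ h₀ and all 2 ≤ n ≤ N the predictor error satisfies |Eᴾₙ₊₁| ≤ 2βh |E_{1/2}| + (2L(1−α)/M)(|Eₙ₋₂| + 3|Eₙ₋₁| + 3|Eₙ|) + 6βh Σ_{j=1}^{n} |E_j| + C h³. -/

import Mathlib

open Real MeasureTheory Finset

/-- Quadratic Lagrange basis polynomial at node `a` with other nodes `b, c`. -/
noncomputable def lagBasis (a b c s : ℝ) : ℝ :=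
  ((s - b) * (s - c)) / ((a - b) * (a - c))

/-- Weight `A⁰ʲₙ₊₁` (basis at `t_{j-1}`) of the quadratic scheme, `j ≥ 1`. -/
noncomputable def quadA0 (β h : ℝ) (n j : ℕ) : ℝ :=
  ∫ s in ((j : ℝ) * h)..(((j : ℝ) + 1) * h),
    lagBasis (((j : ℝ) - 1) * h) ((j : ℝ) * h) (((j : ℝ) + 1) * h) s
      * Real.exp (-β * (((n : ℝ) + 1) * h - s))

/-- Weight `A¹ʲₙ₊₁` (basis at `t_j`) of the quadratic scheme, `j ≥ 1`. -/
noncomputable def quadA1 (β h : ℝ) (n j : ℕ) : ℝ :=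
  ∫ s in ((j : ℝ) * h)..(((j : ℝ) + 1) * h),
    lagBasis ((j : ℝ) * h) (((j : ℝ) - 1) * h) (((j : ℝ) + 1) * h) s
      * Real.exp (-β * (((n : ℝ) + 1) * h - s))

/-- Weight `A²ʲₙ₊₁` (basis at `t_{j+1}`) of the quadratic scheme, `j ≥ 1`. -/
noncomputable def quadA2 (β h : ℝ) (n j : ℕ) : ℝ :=
  ∫ s in ((j : ℝ) * h)..(((j : ℝ) + 1) * h),
    lagBasis (((j : ℝ) + 1) * h) (((j : ℝ) - 1) * h) ((j : ℝ) * h) s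
      * Real.exp (-β * (((n : ℝ) + 1) * h - s))

/-- Weight `A^{0,0}ₙ₊₁` (basis at `t₀ = 0`, nodes `0, h/2, h`) of the quadratic scheme. -/
noncomputable def quadA00 (β h : ℝ) (n : ℕ) : ℝ :=
  ∫ s in (0 : ℝ)..h, lagBasis 0 (h / 2) h s * Real.exp (-β * (((n : ℝ) + 1) * h - s))

/-- Weight `A^{1,0}ₙ₊₁` (basis at `t_{1/2} = h/2`) of the quadratic scheme. -/
noncomputable def quadA10 (β h : ℝ) (n : ℕ) : ℝ :=
  ∫ s in (0 : ℝ)..h, lagBasis (h / 2) 0 h s * Real.exp (-β * (((n : ℝ) + 1) * h - s))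

/-- Weight `A^{2,0}ₙ₊₁` (basis at `t₁ = h`) of the quadratic scheme. -/
noncomputable def quadA20 (β h : ℝ) (n : ℕ) : ℝ :=
  ∫ s in (0 : ℝ)..h, lagBasis h 0 (h / 2) s * Real.exp (-β * (((n : ℝ) + 1) * h - s))

/-!
Subtracting the predictor equation from the integral equation writes the predictor error as the
sum of an extrapolation remainder, the Lipschitz propagation of the three last nodal errors, a
quadrature remainder, and the composite quadrature rule applied to the errors themselves. Both
remainders are instances of one cubic estimate for quadratic interpolation, valid up to one step
past the last node. Every quadrature weight is at most `h` and each nodal value enters at most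
three panels; the implicit term, at most `βh` times the predictor error, is absorbed once
`βh ≤ 1/2`, which produces the factor `2` in all constants.
-/

section Interpolation

variable {E : Type*} [NormedAddCommGroup E] [NormedSpace ℝ E]

/-- The quadratic Lagrange interpolant of `F` at the nodes `a`, `b`, `c`, evaluated at `s`. -/
noncomputable def quadInterp (F : ℝ → E) (a b c s : ℝ) : E :=
  lagBasis a b c s • F a + lagBasis b a c s • F b + lagBasis c a b s • F c

lemma continuous_lagBasis (a b c : ℝ) : Continuous (lagBasis a b c) := by
  unfold lagBasis
  fun_prop

lemma lagBasis_left_add_mul (a θ : ℝ) {δ : ℝ} (hδ : δ ≠ 0) :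
    lagBasis a (a + δ) (a + 2 * δ) (a + θ * δ) = (θ - 1) * (θ - 2) / 2 := by
  rw [lagBasis, show (a - (a + δ)) * (a - (a + 2 * δ)) = 2 * δ ^ 2 by ring]
  field_simp
  ring

lemma lagBasis_mid_add_mul (a θ : ℝ) {δ : ℝ} (hδ : δ ≠ 0) :
    lagBasis (a + δ) a (a + 2 * δ) (a + θ * δ) = θ * (2 - θ) := by
  rw [lagBasis, show (a + δ - a) * (a + δ - (a + 2 * δ)) = -δ ^ 2 by ring]
  field_simp
  ring

lemma lagBasis_right_add_mul (a θ : ℝ) {δ : ℝ} (hδ : δ ≠ 0) :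
    lagBasis (a + 2 * δ) a (a + δ) (a + θ * δ) = θ * (θ - 1) / 2 := by
  rw [lagBasis, show (a + 2 * δ - a) * (a + 2 * δ - (a + δ)) = 2 * δ ^ 2 by ring]
  field_simp
  ring

lemma exists_eq_add_mul_of_mem_Icc {a r s δ : ℝ} (hδ : 0 < δ) (hs : s ∈ Set.Icc a (a + r * δ)) :
    ∃ θ ∈ Set.Icc 0 r, s = a + θ * δ :=
  ⟨(s - a) / δ, ⟨div_nonneg (by linarith [hs.1]) hδ.le, by rw [div_le_iff₀ hδ]; linarith [hs.2]⟩,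
    by field_simp; ring⟩

lemma abs_lagBasis_le_one {a b c s δ : ℝ} (hδ : 0 < δ) (hb : b = a + δ) (hc : c = a + 2 * δ)
    (hs : s ∈ Set.Icc a c) :
    |lagBasis a b c s| ≤ 1 ∧ |lagBasis b a c s| ≤ 1 ∧ |lagBasis c a b s| ≤ 1 := by
  subst hb hc
  obtain ⟨θ, ⟨hθ₀, hθ₂⟩, rfl⟩ := exists_eq_add_mul_of_mem_Icc hδ hs
  rw [lagBasis_left_add_mul a θ hδ.ne', lagBasis_mid_add_mul a θ hδ.ne',
    lagBasis_right_add_mul a θ hδ.ne']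
  refine ⟨abs_le.2 ⟨?_, ?_⟩, abs_le.2 ⟨?_, ?_⟩, abs_le.2 ⟨?_, ?_⟩⟩ <;>
    nlinarith [mul_nonneg hθ₀ (sub_nonneg.2 hθ₂), sq_nonneg (θ - 1), sq_nonneg (θ - 3 / 2),
      sq_nonneg (θ - 1 / 2)]

lemma quadInterp_quadratic (x₀ x₁ x₂ : E) (a s : ℝ) {δ : ℝ} (hδ : δ ≠ 0) :
    quadInterp (fun x => x₀ + (x - a) • x₁ + (x - a) ^ 2 • x₂) a (a + δ) (a + 2 * δ) s =
      x₀ + (s - a) • x₁ + (s - a) ^ 2 • x₂ := by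
  obtain ⟨θ, rfl⟩ : ∃ θ, s = a + θ * δ := ⟨(s - a) / δ, by field_simp; ring⟩
  simp only [quadInterp, lagBasis_left_add_mul a θ hδ, lagBasis_mid_add_mul a θ hδ,
    lagBasis_right_add_mul a θ hδ]
  module

lemma quadInterp_sub (F G : ℝ → E) (a b c s : ℝ) :
    quadInterp (fun x => F x - G x) a b c s = quadInterp F a b c s - quadInterp G a b c s := by
  simp only [quadInterp]
  module

lemma quadInterp_add_three_mul (F : ℝ → E) (a : ℝ) {δ : ℝ} (hδ : δ ≠ 0) :
    quadInterp F a (a + δ) (a + 2 * δ) (a + 3 * δ) =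
      F a - (3 : ℝ) • F (a + δ) + (3 : ℝ) • F (a + 2 * δ) := by
  simp only [quadInterp, lagBasis_left_add_mul a 3 hδ, lagBasis_mid_add_mul a 3 hδ,
    lagBasis_right_add_mul a 3 hδ]
  module

lemma norm_sub_quadInterp_le_of_quadratic {F : ℝ → E} {x₁ x₂ : E} {a B K s δ : ℝ} (hδ : 0 < δ)
    (hB : a + 2 * δ ≤ B) (hs : s ∈ Set.Icc a (a + 3 * δ)) (hsB : s ≤ B)
    (hF : ∀ x ∈ Set.Icc a B, ‖F x - (F a + (x - a) • x₁ + (x - a) ^ 2 • x₂)‖ ≤ K * (x - a) ^ 3) :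
    ‖F s - quadInterp F a (a + δ) (a + 2 * δ) s‖ ≤ 54 * K * δ ^ 3 := by
  obtain ⟨θ, ⟨hθ₀, hθ₃⟩, rfl⟩ := exists_eq_add_mul_of_mem_Icc hδ hs
  set R : ℝ → E := fun x => F x - (F a + (x - a) • x₁ + (x - a) ^ 2 • x₂) with hR
  have hRa : R a = 0 := by simp [hR]
  have hRb : ‖R (a + δ)‖ ≤ K * δ ^ 3 := by
    simpa [hR] using hF (a + δ) ⟨by linarith, by linarith⟩
  have hRc : ‖R (a + 2 * δ)‖ ≤ 8 * (K * δ ^ 3) := by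
    exact (hF _ ⟨by linarith, hB⟩).trans_eq (by ring)
  have hK : 0 ≤ K * δ ^ 3 := (norm_nonneg _).trans hRb
  have hRs : ‖R (a + θ * δ)‖ ≤ 27 * (K * δ ^ 3) := by
    have hθ : θ ^ 3 ≤ 3 ^ 3 := pow_le_pow_left₀ hθ₀ hθ₃ 3
    calc ‖R (a + θ * δ)‖ ≤ K * (a + θ * δ - a) ^ 3 := hF _ ⟨hs.1, hsB⟩
      _ = θ ^ 3 * (K * δ ^ 3) := by ring
      _ ≤ 27 * (K * δ ^ 3) := mul_le_mul_of_nonneg_right (by linarith) hK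
  have hmid : |θ * (2 - θ)| ≤ 3 := abs_le.2 ⟨by nlinarith, by nlinarith [sq_nonneg (θ - 1)]⟩
  have hright : |θ * (θ - 1) / 2| ≤ 3 :=
    abs_le.2 ⟨by nlinarith [sq_nonneg (θ - 1 / 2)], by nlinarith⟩
  have hremainder : F (a + θ * δ) - quadInterp F a (a + δ) (a + 2 * δ) (a + θ * δ) =
      R (a + θ * δ) - ((θ * (2 - θ)) • R (a + δ) + (θ * (θ - 1) / 2) • R (a + 2 * δ)) := by
    have hsub : quadInterp R a (a + δ) (a + 2 * δ) (a + θ * δ) = _ := quadInterp_sub F _ _ _ _ _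
    rw [quadInterp_quadratic _ _ _ _ _ hδ.ne', quadInterp, hRa, smul_zero, zero_add,
      lagBasis_mid_add_mul a θ hδ.ne', lagBasis_right_add_mul a θ hδ.ne'] at hsub
    rw [hsub]
    exact (sub_sub_sub_cancel_right _ _ _).symm
  calc _ ≤ ‖R (a + θ * δ)‖ + (‖(θ * (2 - θ)) • R (a + δ)‖
        + ‖(θ * (θ - 1) / 2) • R (a + 2 * δ)‖) :=
        hremainder ▸ (norm_sub_le _ _).trans (by gcongr; exact norm_add_le _ _)
    _ ≤ 27 * (K * δ ^ 3) + (3 * (K * δ ^ 3) + 3 * (8 * (K * δ ^ 3))) := by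
        rw [norm_smul, norm_smul, Real.norm_eq_abs, Real.norm_eq_abs]
        gcongr
    _ = 54 * K * δ ^ 3 := by ring

lemma exists_taylor_quadratic_bound {F : ℝ → E} {A B : ℝ} (hAB : A < B)
    (hF : ContDiffOn ℝ 3 F (Set.Icc A B)) :
    ∃ K, 0 ≤ K ∧ ∀ a ∈ Set.Ico A B, ∃ x₁ x₂ : E, ∀ x ∈ Set.Icc a B,
      ‖F x - (F a + (x - a) • x₁ + (x - a) ^ 2 • x₂)‖ ≤ K * (x - a) ^ 3 := by
  have hcont : ContinuousOn (iteratedDerivWithin 3 F (Set.Icc A B)) (Set.Icc A B) :=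
    hF.continuousOn_iteratedDerivWithin le_rfl (uniqueDiffOn_Icc hAB)
  obtain ⟨K, hK⟩ := isCompact_Icc.exists_bound_of_continuousOn hcont
  have hK₀ : 0 ≤ K := (norm_nonneg _).trans (hK A ⟨le_rfl, hAB.le⟩)
  refine ⟨K / 2, by positivity, fun a ⟨ha, haB⟩ => ?_⟩
  have hsub : Set.Icc a B ⊆ Set.Icc A B := Set.Icc_subset_Icc_left ha
  have hderiv : ∀ z ∈ Set.Icc a B, ‖iteratedDerivWithin 3 F (Set.Icc a B) z‖ ≤ K := fun z hz => by
    rw [iteratedDerivWithin, iteratedFDerivWithin_subset hsub (uniqueDiffOn_Icc haB)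
      (uniqueDiffOn_Icc hAB) hF hz]
    exact hK z (hsub hz)
  refine ⟨derivWithin F (Set.Icc a B) a,
    (2⁻¹ : ℝ) • iteratedDerivWithin 2 F (Set.Icc a B) a, fun x hx => ?_⟩
  have htaylor : taylorWithinEval F 2 (Set.Icc a B) a x =
      F a + (x - a) • derivWithin F (Set.Icc a B) a
        + (x - a) ^ 2 • (2⁻¹ : ℝ) • iteratedDerivWithin 2 F (Set.Icc a B) a := by
    rw [taylorWithinEval_succ, taylorWithinEval_succ, taylor_within_zero_eval,
      iteratedDerivWithin_one]
    simp only [Nat.cast_zero, Nat.cast_one, zero_add, one_add_one_eq_two, Nat.factorial_zero,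
      Nat.factorial_one, mul_one, inv_one, pow_one, one_mul]
    module
  rw [← htaylor]
  refine (taylor_mean_remainder_bound haB.le (hF.mono hsub) hx hderiv).trans_eq ?_
  rw [Nat.factorial_two, Nat.cast_two]
  ring

/-- Quadratic interpolation of `F` on `[A, B]` at the nodes `a`, `a + δ`, `a + 2δ` is accurate to
`K δ³`. The evaluation point may lie one step beyond the last node, so that the predictor's
extrapolation is covered along with interpolation. -/
def QuadInterpBound (F : ℝ → E) (A B K : ℝ) : Prop :=
  ∀ ⦃a δ s : ℝ⦄, A ≤ a → 0 < δ → a + 2 * δ ≤ B → s ∈ Set.Icc a (a + 3 * δ) → s ≤ B →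
    ‖F s - quadInterp F a (a + δ) (a + 2 * δ) s‖ ≤ K * δ ^ 3

lemma exists_quadInterpBound {F : ℝ → E} {A B : ℝ} (hAB : A < B)
    (hF : ContDiffOn ℝ 3 F (Set.Icc A B)) : ∃ K, 0 ≤ K ∧ QuadInterpBound F A B K := by
  obtain ⟨K, hK, htaylor⟩ := exists_taylor_quadratic_bound hAB hF
  refine ⟨54 * K, by positivity, fun a δ s ha hδ hB hs hsB => ?_⟩
  obtain ⟨x₁, x₂, hx⟩ := htaylor a ⟨ha, by linarith⟩
  exact norm_sub_quadInterp_le_of_quadratic hδ hB hs hsB hx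

lemma QuadInterpBound.norm_sub_extrapolation_le {F : ℝ → E} {A B K a δ : ℝ}
    (hF : QuadInterpBound F A B K) (ha : A ≤ a) (hδ : 0 < δ) (hB : a + 3 * δ ≤ B) :
    ‖F (a + 3 * δ) - (F a - (3 : ℝ) • F (a + δ) + (3 : ℝ) • F (a + 2 * δ))‖ ≤ K * δ ^ 3 := by
  rw [← quadInterp_add_three_mul F a hδ.ne']
  exact hF ha hδ (by linarith) ⟨by linarith, le_rfl⟩ hB

end Interpolation

section Quadrature

variable {E : Type*} [NormedAddCommGroup E] [NormedSpace ℝ E]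

lemma abs_integral_mul_le_sub {l w : ℝ → ℝ} {p q : ℝ} (hpq : p ≤ q)
    (hl : ∀ s ∈ Set.Icc p q, |l s| ≤ 1) (hw : ∀ s ∈ Set.Icc p q, |w s| ≤ 1) :
    |∫ s in p..q, l s * w s| ≤ q - p := by
  have hbound : ∀ s ∈ Set.uIoc p q, ‖l s * w s‖ ≤ 1 := fun s hs => by
    have hs' := Set.Ioc_subset_Icc_self (Set.uIoc_of_le hpq ▸ hs)
    rw [Real.norm_eq_abs, abs_mul]
    exact mul_le_one₀ (hl s hs') (abs_nonneg _) (hw s hs')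
  simpa [abs_of_nonneg (sub_nonneg.2 hpq)] using
    intervalIntegral.norm_integral_le_of_norm_le_const hbound

lemma integral_smul_quadInterp [CompleteSpace E] {w : ℝ → ℝ} (hw : Continuous w) (F : ℝ → E)
    (a b c p q : ℝ) :
    ∫ s in p..q, w s • quadInterp F a b c s =
      (∫ s in p..q, lagBasis a b c s * w s) • F a + (∫ s in p..q, lagBasis b a c s * w s) • F b
        + (∫ s in p..q, lagBasis c a b s * w s) • F c := by
  have hint : ∀ x y z (v : E),
      IntervalIntegrable (fun s => (lagBasis x y z s * w s) • v) volume p q := fun x y z v =>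
    (((continuous_lagBasis x y z).mul hw).smul continuous_const).intervalIntegrable _ _
  simp only [← intervalIntegral.integral_smul_const]
  rw [← intervalIntegral.integral_add (hint _ _ _ _) (hint _ _ _ _),
    ← intervalIntegral.integral_add ((hint _ _ _ _).add (hint _ _ _ _)) (hint _ _ _ _)]
  refine intervalIntegral.integral_congr fun s _ => ?_
  simp only [quadInterp]
  module

lemma norm_integral_smul_sub_quadrature_le [CompleteSpace E] {w : ℝ → ℝ} {F : ℝ → E}
    {a b c p q ε : ℝ} (hpq : p ≤ q) (hw : Continuous w) (hw₁ : ∀ s ∈ Set.Icc p q, |w s| ≤ 1)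
    (hFc : ContinuousOn F (Set.Icc p q))
    (hF : ∀ s ∈ Set.Icc p q, ‖F s - quadInterp F a b c s‖ ≤ ε) :
    ‖(∫ s in p..q, w s • F s) - ((∫ s in p..q, lagBasis a b c s * w s) • F a
        + (∫ s in p..q, lagBasis b a c s * w s) • F b
        + (∫ s in p..q, lagBasis c a b s * w s) • F c)‖ ≤ ε * (q - p) := by
  have hintF : IntervalIntegrable (fun s => w s • F s) volume p q :=
    (hw.continuousOn.smul hFc).intervalIntegrable_of_Icc hpq
  have hintQ : IntervalIntegrable (fun s => w s • quadInterp F a b c s) volume p q := by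
    refine Continuous.intervalIntegrable (hw.smul ?_) p q
    exact (((continuous_lagBasis a b c).smul continuous_const).add
      ((continuous_lagBasis b a c).smul continuous_const)).add
      ((continuous_lagBasis c a b).smul continuous_const)
  rw [← integral_smul_quadInterp hw, ← intervalIntegral.integral_sub hintF hintQ,
    ← abs_of_nonneg (sub_nonneg.2 hpq)]
  refine intervalIntegral.norm_integral_le_of_norm_le_const fun s hs => ?_
  have hs' := Set.Ioc_subset_Icc_self (Set.uIoc_of_le hpq ▸ hs)
  rw [← smul_sub, norm_smul, Real.norm_eq_abs, ← one_mul ε]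
  exact mul_le_mul (hw₁ s hs') (hF s hs') (norm_nonneg _) zero_le_one

lemma abs_exp_neg_mul_sub_le_one {β s t : ℝ} (hβ : 0 ≤ β) (hst : s ≤ t) :
    |Real.exp (-β * (t - s))| ≤ 1 := by
  rw [Real.abs_exp, Real.exp_le_one_iff, neg_mul, neg_nonpos]
  exact mul_nonneg hβ (sub_nonneg.2 hst)

lemma abs_integral_lagBasis_mul_exp_le {β t p q x y z : ℝ} (hβ : 0 ≤ β) (hpq : p ≤ q)
    (hqt : q ≤ t) (hl : ∀ s ∈ Set.Icc p q, |lagBasis x y z s| ≤ 1) :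
    |∫ s in p..q, lagBasis x y z s * Real.exp (-β * (t - s))| ≤ q - p :=
  abs_integral_mul_le_sub hpq hl fun _ hs => abs_exp_neg_mul_sub_le_one hβ (hs.2.trans hqt)

lemma abs_quadA_le {β h : ℝ} {n j : ℕ} (hβ : 0 ≤ β) (hh : 0 < h) (hj : j ≤ n) :
    |quadA0 β h n j| ≤ h ∧ |quadA1 β h n j| ≤ h ∧ |quadA2 β h n j| ≤ h := by
  have hbasis := fun s (hs : s ∈ Set.Icc ((j : ℝ) * h) (((j : ℝ) + 1) * h)) =>
    abs_lagBasis_le_one (a := ((j : ℝ) - 1) * h) (b := (j : ℝ) * h) hh (by ring) (by ring)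
      ⟨by linarith [hs.1], hs.2⟩
  have hlen : ((j : ℝ) + 1) * h - (j : ℝ) * h = h := by ring
  have hpq : (j : ℝ) * h ≤ ((j : ℝ) + 1) * h := by linarith
  have hqt : ((j : ℝ) + 1) * h ≤ ((n : ℝ) + 1) * h := by gcongr
  exact ⟨(abs_integral_lagBasis_mul_exp_le hβ hpq hqt fun s hs => (hbasis s hs).1).trans_eq hlen,
    (abs_integral_lagBasis_mul_exp_le hβ hpq hqt fun s hs => (hbasis s hs).2.1).trans_eq hlen,
    (abs_integral_lagBasis_mul_exp_le hβ hpq hqt fun s hs => (hbasis s hs).2.2).trans_eq hlen⟩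

lemma le_natCast_add_one_mul {h : ℝ} (hh : 0 ≤ h) (n : ℕ) : h ≤ ((n : ℝ) + 1) * h :=
  le_mul_of_one_le_left hh (by simp)

lemma abs_quadA_first_panel_le {β h : ℝ} (hβ : 0 ≤ β) (hh : 0 < h) (n : ℕ) :
    |quadA10 β h n| ≤ h ∧ |quadA20 β h n| ≤ h := by
  have hbasis := fun s (hs : s ∈ Set.Icc 0 h) =>
    abs_lagBasis_le_one (half_pos hh) (zero_add _).symm (by ring) hs
  have hqt := le_natCast_add_one_mul hh.le n
  exact
    ⟨(abs_integral_lagBasis_mul_exp_le hβ hh.le hqt fun s hs => (hbasis s hs).2.1).trans_eq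
        (sub_zero h),
      (abs_integral_lagBasis_mul_exp_le hβ hh.le hqt fun s hs => (hbasis s hs).2.2).trans_eq
        (sub_zero h)⟩

end Quadrature

section Memory

variable {E : Type*} [NormedAddCommGroup E] [NormedSpace ℝ E]

/-- The composite quadratic rule for the memory term `∫₀^{tₙ₊₁} u(s) exp(-β(tₙ₊₁ - s)) ds`, where
`u j` is the value at `t_j` for `j ≤ n`, `v` the value at `t_{1/2}` and `p` the value at
`tₙ₊₁`; `p` is a separate argument because the predictor and the corrector differ there. -/
noncomputable def quadMemory (β h : ℝ) (n : ℕ) (u : ℕ → E) (v p : E) : E :=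
  quadA00 β h n • u 0 + quadA10 β h n • v + quadA20 β h n • u 1
    + ((∑ j ∈ Icc 1 (n - 1),
        (quadA0 β h n j • u (j - 1) + quadA1 β h n j • u j + quadA2 β h n j • u (j + 1)))
      + (quadA0 β h n n • u (n - 1) + quadA1 β h n n • u n + quadA2 β h n n • p))

lemma quadMemory_sub (β h : ℝ) (n : ℕ) (u u' : ℕ → E) (v v' p p' : E) :
    quadMemory β h n (fun j => u j - u' j) (v - v') (p - p') =
      quadMemory β h n u v p - quadMemory β h n u' v' p' := by
  have hsum : ∑ j ∈ Icc 1 (n - 1), (quadA0 β h n j • (u (j - 1) - u' (j - 1))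
        + quadA1 β h n j • (u j - u' j) + quadA2 β h n j • (u (j + 1) - u' (j + 1))) =
      (∑ j ∈ Icc 1 (n - 1),
        (quadA0 β h n j • u (j - 1) + quadA1 β h n j • u j + quadA2 β h n j • u (j + 1)))
      - ∑ j ∈ Icc 1 (n - 1),
        (quadA0 β h n j • u' (j - 1) + quadA1 β h n j • u' j + quadA2 β h n j • u' (j + 1)) := by
    rw [← sum_sub_distrib]
    exact sum_congr rfl fun j _ => by module
  simp only [quadMemory, hsum]
  module

lemma sum_Icc_one_pred {M : Type*} [AddCommMonoid M] (e : ℕ → M) (m : ℕ) :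
    ∑ j ∈ Icc 1 (m + 1), e (j - 1) = e 0 + ∑ j ∈ Icc 1 m, e j := by
  induction m with
  | zero => simp
  | succ m ih =>
    rw [sum_Icc_succ_top (by lia), ih, sum_Icc_succ_top (by lia), Nat.add_sub_cancel, add_assoc]

lemma sum_Icc_one_succ {M : Type*} [AddCommMonoid M] (e : ℕ → M) (m : ℕ) :
    ∑ j ∈ Icc 1 (m + 1), e j = e 1 + ∑ j ∈ Icc 1 m, e (j + 1) := by
  induction m with
  | zero => simp
  | succ m ih => rw [sum_Icc_succ_top (by lia), ih, sum_Icc_succ_top (by lia), add_assoc]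

lemma norm_sum_smul_le {ι : Type*} {s : Finset ι} {a : ι → ℝ} {h : ℝ} (x : ι → E)
    (ha : ∀ i ∈ s, |a i| ≤ h) : ‖∑ i ∈ s, a i • x i‖ ≤ h * ∑ i ∈ s, ‖x i‖ := by
  rw [mul_sum]
  exact norm_sum_le_of_le s fun i hi =>
    (norm_smul_le _ _).trans (mul_le_mul_of_nonneg_right (ha i hi) (norm_nonneg _))

-- Each value `u j` with `j ≥ 1` enters at most three panels, once through each of the weight
-- families `A⁰`, `A¹`, `A²`; the three inner sums collect these families.
lemma quadMemory_eq_sum_by_weight (β h : ℝ) (m : ℕ) (u : ℕ → E) (v p : E) :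
    quadMemory β h (m + 1) u v p = quadA00 β h (m + 1) • u 0
      + ((quadA10 β h (m + 1) • v + quadA2 β h (m + 1) (m + 1) • p)
      + (∑ j ∈ Icc 1 (m + 1), quadA0 β h (m + 1) j • u (j - 1)
        + (∑ j ∈ Icc 1 (m + 1), quadA1 β h (m + 1) j • u j
        + (quadA20 β h (m + 1) • u 1 + ∑ j ∈ Icc 1 m, quadA2 β h (m + 1) j • u (j + 1))))) := by
  simp only [quadMemory, Nat.add_sub_cancel, sum_add_distrib,
    sum_Icc_succ_top (Nat.le_add_left 1 m)]
  module

lemma norm_quadMemory_le {β h : ℝ} {n : ℕ} {u : ℕ → E} (hβ : 0 ≤ β) (hh : 0 < h) (hn : 1 ≤ n)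
    (hu : u 0 = 0) (v p : E) :
    ‖quadMemory β h n u v p‖ ≤ h * (‖v‖ + 3 * ∑ j ∈ Icc 1 n, ‖u j‖ + ‖p‖) := by
  obtain ⟨m, rfl⟩ := Nat.exists_eq_add_of_le' hn
  obtain ⟨h10, h20⟩ := abs_quadA_first_panel_le hβ hh (m + 1)
  have hA : ∀ j ∈ Icc 1 (m + 1), _ := fun j hj => abs_quadA_le hβ hh (mem_Icc.1 hj).2
  have hleft : ‖∑ j ∈ Icc 1 (m + 1), quadA0 β h (m + 1) j • u (j - 1)‖
      ≤ h * ∑ j ∈ Icc 1 (m + 1), ‖u j‖ := by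
    refine (norm_sum_smul_le _ fun j hj => (hA j hj).1).trans ?_
    rw [sum_Icc_one_pred (fun j => ‖u j‖), hu, norm_zero, zero_add, sum_Icc_succ_top (by lia)]
    gcongr
    exact le_add_of_nonneg_right (norm_nonneg _)
  have hmid : ‖∑ j ∈ Icc 1 (m + 1), quadA1 β h (m + 1) j • u j‖
      ≤ h * ∑ j ∈ Icc 1 (m + 1), ‖u j‖ := norm_sum_smul_le _ fun j hj => (hA j hj).2.1
  have hright : ‖quadA20 β h (m + 1) • u 1 + ∑ j ∈ Icc 1 m, quadA2 β h (m + 1) j • u (j + 1)‖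
      ≤ h * ∑ j ∈ Icc 1 (m + 1), ‖u j‖ := by
    rw [sum_Icc_one_succ, mul_add]
    refine norm_add_le_of_le ((norm_smul_le _ _).trans ?_) (norm_sum_smul_le _ fun j hj => ?_)
    · gcongr
      exact h20
    · exact (hA j (Icc_subset_Icc_right m.le_succ hj)).2.2
  have hends : ‖quadA10 β h (m + 1) • v + quadA2 β h (m + 1) (m + 1) • p‖
      ≤ h * ‖v‖ + h * ‖p‖ := by
    refine norm_add_le_of_le ((norm_smul_le _ _).trans ?_) ((norm_smul_le _ _).trans ?_)
    · gcongr
      exact h10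
    · gcongr
      exact (hA (m + 1) (mem_Icc.2 ⟨hn, le_rfl⟩)).2.2
  rw [quadMemory_eq_sum_by_weight, hu, smul_zero, zero_add]
  refine (norm_add_le_of_le hends
    (norm_add_le_of_le hleft (norm_add_le_of_le hmid hright))).trans_eq ?_
  ring

lemma integral_eq_add_sum_panels {φ : ℝ → E} {h : ℝ} (hh : 0 ≤ h) (n : ℕ)
    (hφ : ContinuousOn φ (Set.Icc 0 (((n : ℝ) + 1) * h))) :
    ∫ s in (0 : ℝ)..(((n : ℝ) + 1) * h), φ s =
      (∫ s in (0 : ℝ)..h, φ s) + ∑ j ∈ Icc 1 n, ∫ s in ((j : ℝ) * h)..(((j : ℝ) + 1) * h), φ s := by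
  have hint : ∀ k < n + 1,
      IntervalIntegrable φ volume ((k : ℝ) * h) (((k + 1 : ℕ) : ℝ) * h) := fun k hk => by
    have hkn : ((k + 1 : ℕ) : ℝ) ≤ (n : ℝ) + 1 := by exact_mod_cast hk
    refine (hφ.mono (Set.Icc_subset_Icc (by positivity) (by gcongr))).intervalIntegrable_of_Icc ?_
    gcongr
    exact k.le_succ
  have hsum := intervalIntegral.sum_integral_adjacent_intervals hint
  rw [range_eq_Ico, sum_eq_sum_Ico_succ_bot n.succ_pos] at hsum
  simpa [Ico_add_one_right_eq_Icc] using hsum.symm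

lemma quadMemory_samples {n : ℕ} (hn : 1 ≤ n) (β h : ℝ) (F : ℝ → E) :
    quadMemory β h n (fun j => F (j * h)) (F (h / 2)) (F (((n : ℝ) + 1) * h)) =
      (quadA00 β h n • F 0 + quadA10 β h n • F (h / 2) + quadA20 β h n • F h)
      + ∑ j ∈ Icc 1 n, (quadA0 β h n j • F (((j : ℝ) - 1) * h) + quadA1 β h n j • F (j * h)
          + quadA2 β h n j • F (((j : ℝ) + 1) * h)) := by
  obtain ⟨m, rfl⟩ := Nat.exists_eq_add_of_le' hn
  have hpanel : ∀ j ∈ Icc 1 m, ((j - 1 : ℕ) : ℝ) = (j : ℝ) - 1 := fun j hj =>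
    Nat.cast_pred (mem_Icc.1 hj).1
  rw [quadMemory, sum_Icc_succ_top (by lia), Nat.add_sub_cancel]
  congr 2
  · simp
  · simp
  · exact sum_congr rfl fun j hj => by rw [hpanel j hj, Nat.cast_add_one]
  · simp

lemma QuadInterpBound.norm_integral_sub_quadMemory_le [CompleteSpace E] {β h K T : ℝ} {n : ℕ}
    {y : ℝ → E} (hy : QuadInterpBound y 0 T K) (hK : 0 ≤ K) (hyc : ContinuousOn y (Set.Icc 0 T))
    (hβ : 0 ≤ β) (hh : 0 < h) (hn : 1 ≤ n) (hT : ((n : ℝ) + 1) * h ≤ T) :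
    ‖(∫ s in (0 : ℝ)..(((n : ℝ) + 1) * h), Real.exp (-β * (((n : ℝ) + 1) * h - s)) • y s)
        - quadMemory β h n (fun j => y (j * h)) (y (h / 2)) (y (((n : ℝ) + 1) * h))‖
      ≤ K * h ^ 3 * T := by
  set t := ((n : ℝ) + 1) * h with ht
  have hw : Continuous fun s => Real.exp (-β * (t - s)) := by fun_prop
  have hht : h ≤ t := le_natCast_add_one_mul hh.le n
  have hsub : ∀ {p q : ℝ}, 0 ≤ p → q ≤ t → ContinuousOn y (Set.Icc p q) := fun hp hq =>
    hyc.mono (Set.Icc_subset_Icc hp (hq.trans hT))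
  have hfirst : ‖(∫ s in (0 : ℝ)..h, Real.exp (-β * (t - s)) • y s)
      - (quadA00 β h n • y 0 + quadA10 β h n • y (h / 2) + quadA20 β h n • y h)‖
      ≤ K * h ^ 3 * h := by
    refine (norm_integral_smul_sub_quadrature_le hh.le hw
      (fun s hs => abs_exp_neg_mul_sub_le_one hβ (hs.2.trans hht)) (hsub le_rfl hht)
      (ε := K * h ^ 3) fun s hs => ?_).trans_eq (by rw [sub_zero])
    have hs' := hy le_rfl (half_pos hh) (s := s) (by linarith) ⟨hs.1, by linarith [hs.2]⟩
      (by linarith [hs.2])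
    rw [zero_add, zero_add, mul_div_cancel₀ h two_ne_zero] at hs'
    refine hs'.trans ?_
    gcongr
    linarith
  have hpanel : ∀ j ∈ Icc 1 n,
      ‖(∫ s in ((j : ℝ) * h)..(((j : ℝ) + 1) * h), Real.exp (-β * (t - s)) • y s)
        - (quadA0 β h n j • y (((j : ℝ) - 1) * h) + quadA1 β h n j • y (j * h)
          + quadA2 β h n j • y (((j : ℝ) + 1) * h))‖ ≤ K * h ^ 3 * h := fun j hj => by
    obtain ⟨hj₁, hjn⟩ := mem_Icc.1 hj
    have hjt : ((j : ℝ) + 1) * h ≤ t := by rw [ht]; gcongr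
    have hj₀ : 0 ≤ ((j : ℝ) - 1) * h := mul_nonneg (by simpa using hj₁) hh.le
    refine (norm_integral_smul_sub_quadrature_le (by linarith) hw
      (fun s hs => abs_exp_neg_mul_sub_le_one hβ (hs.2.trans hjt)) (hsub (by positivity) hjt)
      (ε := K * h ^ 3) fun s hs => ?_).trans_eq (by ring)
    have hs' := hy hj₀ hh (s := s) (by linarith) ⟨by linarith [hs.1], by linarith [hs.2]⟩
      (by linarith [hs.2])
    rwa [show ((j : ℝ) - 1) * h + h = j * h by ring,
      show ((j : ℝ) - 1) * h + 2 * h = ((j : ℝ) + 1) * h by ring] at hs'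
  have hsplit := integral_eq_add_sum_panels (φ := fun s => Real.exp (-β * (t - s)) • y s) hh.le n
    (hw.continuousOn.smul (hsub le_rfl le_rfl))
  rw [← ht] at hsplit
  rw [hsplit, quadMemory_samples hn, add_sub_add_comm, ← sum_sub_distrib]
  calc _ ≤ K * h ^ 3 * h + ∑ _j ∈ Icc 1 n, K * h ^ 3 * h :=
        norm_add_le_of_le hfirst (norm_sum_le_of_le _ hpanel)
    _ = K * h ^ 3 * t := by
        rw [sum_const, Nat.card_Icc, nsmul_eq_mul, Nat.add_sub_cancel, ht]
        ring
    _ ≤ K * h ^ 3 * T := by gcongr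

end Memory

section Predictor

variable {E : Type*} [NormedAddCommGroup E] [NormedSpace ℝ E]

/-- The value at index `n + 1` of the quadratic through the last three terms `φ (n - 2)`,
`φ (n - 1)`, `φ n` of a sequence; meaningful only for `2 ≤ n`. -/
def extrapolate (φ : ℕ → E) (n : ℕ) : E :=
  φ (n - 2) - (3 : ℝ) • φ (n - 1) + (3 : ℝ) • φ n

lemma norm_extrapolate_sub_le (φ ψ : ℕ → E) (n : ℕ) :
    ‖extrapolate φ n - extrapolate ψ n‖ ≤
      ‖φ (n - 2) - ψ (n - 2)‖ + 3 * ‖φ (n - 1) - ψ (n - 1)‖ + 3 * ‖φ n - ψ n‖ := by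
  have hsplit : extrapolate φ n - extrapolate ψ n = (φ (n - 2) - ψ (n - 2))
      - (3 : ℝ) • (φ (n - 1) - ψ (n - 1)) + (3 : ℝ) • (φ n - ψ n) := by
    simp only [extrapolate]
    module
  have hthree : ∀ x : E, ‖(3 : ℝ) • x‖ = 3 * ‖x‖ := fun x => by rw [norm_smul, Real.norm_ofNat]
  rw [hsplit, ← hthree, ← hthree]
  exact norm_add_le_of_le (norm_sub_le _ _) le_rfl

lemma QuadInterpBound.norm_sub_extrapolate_le {F : ℝ → E} {K T h : ℝ} {n : ℕ}
    (hF : QuadInterpBound F 0 T K) (hh : 0 < h) (hn : 2 ≤ n) (hT : ((n : ℝ) + 1) * h ≤ T) :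
    ‖F (((n : ℝ) + 1) * h) - extrapolate (fun j => F (j * h)) n‖ ≤ K * h ^ 3 := by
  obtain ⟨m, rfl⟩ := Nat.exists_eq_add_of_le' hn
  have hend : (m : ℝ) * h + 3 * h = (((m + 2 : ℕ) : ℝ) + 1) * h := by push_cast; ring
  have herr := hF.norm_sub_extrapolation_le (by positivity) hh (hend ▸ hT)
  rwa [hend, show (m : ℝ) * h + h = ((m + 1 : ℕ) : ℝ) * h by push_cast; ring,
    show (m : ℝ) * h + 2 * h = ((m + 2 : ℕ) : ℝ) * h by push_cast; ring] at herr

lemma norm_predictor_error_le [CompleteSpace E] {β c h K₁ K₂ L T : ℝ} {n : ℕ} {f : ℝ → E → E}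
    {y : ℝ → E} {u : ℕ → E} {g v p : E} (hβ : 0 ≤ β) (hc : 0 ≤ c) (hh : 0 < h)
    (hβh : β * h ≤ 1 / 2) (hn : 2 ≤ n) (hT : ((n : ℝ) + 1) * h ≤ T)
    (hf : ∀ t ∈ Set.Icc (0 : ℝ) T, ∀ u₁ u₂, ‖f t u₁ - f t u₂‖ ≤ L * ‖u₁ - u₂‖)
    (hyc : ContinuousOn y (Set.Icc 0 T)) (hK₁ : 0 ≤ K₁) (hy : QuadInterpBound y 0 T K₁)
    (hfy : QuadInterpBound (fun t => f t (y t)) 0 T K₂)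
    (hint : y (((n : ℝ) + 1) * h) = c • f (((n : ℝ) + 1) * h) (y (((n : ℝ) + 1) * h)) + g
      + β • ∫ s in (0 : ℝ)..(((n : ℝ) + 1) * h), Real.exp (-β * (((n : ℝ) + 1) * h - s)) • y s)
    (hu : u 0 = y 0)
    (hp : p = c • extrapolate (fun j => f (j * h) (u j)) n + g + β • quadMemory β h n u v p) :
    ‖y (((n : ℝ) + 1) * h) - p‖ ≤ 2 * β * h * ‖y (h / 2) - v‖
      + 2 * L * c * (‖y (↑(n - 2) * h) - u (n - 2)‖ + 3 * ‖y (↑(n - 1) * h) - u (n - 1)‖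
        + 3 * ‖y (n * h) - u n‖)
      + 6 * β * h * ∑ j ∈ Icc 1 n, ‖y (j * h) - u j‖
      + 2 * (c * K₂ + β * K₁ * T) * h ^ 3 := by
  set t := ((n : ℝ) + 1) * h
  set e : ℕ → E := fun j => y (j * h) - u j with he
  have hextrapolation := hfy.norm_sub_extrapolate_le hh hn hT
  have hquadrature := hy.norm_integral_sub_quadMemory_le hK₁ hyc hβ hh (one_le_two.trans hn) hT
  have hmemory := norm_quadMemory_le hβ hh (one_le_two.trans hn) (u := e) (by simp [he, hu])
    (y (h / 2) - v) (y t - p)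
  have hlip : ∀ j ≤ n, ‖f (j * h) (y (j * h)) - f (j * h) (u j)‖ ≤ L * ‖e j‖ := fun j hj => by
    have hjn : (j : ℝ) ≤ (n : ℝ) + 1 := by exact_mod_cast hj.trans n.le_succ
    exact hf _ ⟨by positivity, (mul_le_mul_of_nonneg_right hjn hh.le).trans hT⟩ _ _
  have hdata := (norm_extrapolate_sub_le (fun j => f (j * h) (y (j * h)))
    (fun j => f (j * h) (u j)) n).trans (add_le_add_three (hlip _ (n.sub_le 2))
      (mul_le_mul_of_nonneg_left (hlip _ (n.sub_le 1)) zero_le_three)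
      (mul_le_mul_of_nonneg_left (hlip n le_rfl) zero_le_three))
  have herror : y t - p = c • (f t (y t) - extrapolate (fun j => f (j * h) (y (j * h))) n)
      + c • (extrapolate (fun j => f (j * h) (y (j * h))) n
        - extrapolate (fun j => f (j * h) (u j)) n)
      + β • ((∫ s in (0 : ℝ)..t, Real.exp (-β * (t - s)) • y s)
        - quadMemory β h n (fun j => y (j * h)) (y (h / 2)) (y t))
      + β • quadMemory β h n e (y (h / 2) - v) (y t - p) := by
    rw [he, quadMemory_sub]
    conv_lhs => rw [hint, hp]
    module
  have hscale : ∀ {r R : ℝ} {x : E}, 0 ≤ r → ‖x‖ ≤ R → ‖r • x‖ ≤ r * R := fun hr hx =>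
    (norm_smul_of_nonneg hr _).trans_le (mul_le_mul_of_nonneg_left hx hr)
  have hbound : ‖y t - p‖ ≤ _ := (congrArg norm herror).trans_le <|
    norm_add_le_of_le (norm_add_le_of_le (norm_add_le_of_le (hscale hc hextrapolation)
      (hscale hc hdata)) (hscale hβ hquadrature)) (hscale hβ hmemory)
  have habsorb := mul_le_mul_of_nonneg_right hβh (norm_nonneg (y t - p))
  linarith

end Predictor

theorem quadratic_predictor_error_general {E : Type*} [NormedAddCommGroup E] [NormedSpace ℝ E]
    [CompleteSpace E] {β c L T : ℝ} {f : ℝ → E → E} {g y : ℝ → E} (hβ : 0 ≤ β) (hc : 0 ≤ c)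
    (hT : 0 < T)
    (hf : ∀ t ∈ Set.Icc (0 : ℝ) T, ∀ u₁ u₂, ‖f t u₁ - f t u₂‖ ≤ L * ‖u₁ - u₂‖)
    (hy : ContDiffOn ℝ 3 y (Set.Icc 0 T))
    (hfy : ContDiffOn ℝ 3 (fun t => f t (y t)) (Set.Icc 0 T))
    (hint : ∀ t ∈ Set.Icc (0 : ℝ) T,
      y t = c • f t (y t) + g t + β • ∫ s in (0 : ℝ)..t, Real.exp (-β * (t - s)) • y s) :
    ∃ h₀ > (0 : ℝ), ∃ C : ℝ, ∀ (N : ℕ) (h : ℝ), h = T / (N + 1) → h ≤ h₀ →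
      ∀ n, 2 ≤ n → n ≤ N → ∀ (u : ℕ → E) (v p : E), u 0 = y 0 →
        p = c • extrapolate (fun j => f (j * h) (u j)) n + g (((n : ℝ) + 1) * h)
          + β • quadMemory β h n u v p →
        ‖y (((n : ℝ) + 1) * h) - p‖ ≤ 2 * β * h * ‖y (h / 2) - v‖
          + 2 * L * c * (‖y (↑(n - 2) * h) - u (n - 2)‖ + 3 * ‖y (↑(n - 1) * h) - u (n - 1)‖
            + 3 * ‖y (n * h) - u n‖)
          + 6 * β * h * ∑ j ∈ Icc 1 n, ‖y (j * h) - u j‖ + C * h ^ 3 := by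
  obtain ⟨K₁, hK₁, hyK⟩ := exists_quadInterpBound hT hy
  obtain ⟨K₂, -, hfyK⟩ := exists_quadInterpBound hT hfy
  refine ⟨1 / (2 * β + 1), by positivity, 2 * (c * K₂ + β * K₁ * T),
    fun N h hN hh₀ n hn hnN u v p hu hp => ?_⟩
  have hh : 0 < h := by rw [hN]; positivity
  have htT : ((n : ℝ) + 1) * h ≤ T := by
    calc ((n : ℝ) + 1) * h ≤ ((N : ℝ) + 1) * h := by gcongr
      _ = T := by rw [hN]; field_simp
  have hβh : β * h ≤ 1 / 2 := by
    have := (le_div_iff₀ (by positivity)).1 hh₀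
    linarith
  exact norm_predictor_error_le hβ hc hh hβh hn htT hf hy.continuousOn hK₁ hyK hfyK
    (hint _ ⟨by positivity, htT⟩) hu hp

/-- Predictor error bound of the quadratic-interpolation predictor–corrector scheme:
`|Eᴾₙ₊₁| ≤ 2βh|E_{1/2}| + (2L(1-α)/M)(|Eₙ₋₂| + 3|Eₙ₋₁| + 3|Eₙ|) + 6βh Σ_{j=1}^n |E_j| + Ch³`. -/
theorem quadratic_predictor_error
    (α β M T L y₀ : ℝ) (f : ℝ → ℝ → ℝ) (y : ℝ → ℝ)
    (hα : α ∈ Set.Ioo (0 : ℝ) 1) (hβ : β = α / (1 - α)) (hM : 0 < M) (hT : 0 < T)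
    (hL : 0 ≤ L)
    (hf : ∀ t ∈ Set.Icc (0 : ℝ) T, ∀ u₁ u₂ : ℝ, |f t u₁ - f t u₂| ≤ L * |u₁ - u₂|)
    (hy : ContDiffOn ℝ 3 y (Set.Icc 0 T)) (hy0 : y 0 = y₀)
    (hfy : ContDiffOn ℝ 3 (fun t => f t (y t)) (Set.Icc 0 T))
    (hint : ∀ t ∈ Set.Icc (0 : ℝ) T,
      y t = ((1 - α) / M) * f t (y t) + y₀ * Real.exp (-β * t)
        + β * ∫ s in (0 : ℝ)..t, y s * Real.exp (-β * (t - s))) :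
    ∃ h₀ > (0 : ℝ), ∃ C : ℝ,
      ∀ (N : ℕ) (h : ℝ), h = T / (N + 1) → h ≤ h₀ →
        ∀ (yseq yp : ℕ → ℝ) (yhalf : ℝ),
          yseq 0 = y₀ →
          (∀ n, 2 ≤ n → n ≤ N →
            -- predictor
            (1 - β * quadA2 β h n n) * yp (n + 1)
              = (((1 - α) / M) * (f ((↑(n - 2) : ℝ) * h) (yseq (n - 2))
                    - 3 * f ((↑(n - 1) : ℝ) * h) (yseq (n - 1))
                    + 3 * f ((n : ℝ) * h) (yseq n))
                  + y₀ * Real.exp (-β * (((n : ℝ) + 1) * h)))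
                + β * (quadA00 β h n * yseq 0 + quadA10 β h n * yhalf
                    + quadA20 β h n * yseq 1)
                + β * ((∑ j ∈ Finset.Icc 1 (n - 1),
                      (quadA0 β h n j * yseq (j - 1) + quadA1 β h n j * yseq j
                        + quadA2 β h n j * yseq (j + 1)))
                    + quadA0 β h n n * yseq (n - 1) + quadA1 β h n n * yseq n) ∧
            -- corrector
            (1 - β * quadA2 β h n n) * yseq (n + 1)
              = (((1 - α) / M) * f (((n : ℝ) + 1) * h) (yp (n + 1))
                  + y₀ * Real.exp (-β * (((n : ℝ) + 1) * h)))
                + β * (quadA00 β h n * yseq 0 + quadA10 β h n * yhalf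
                    + quadA20 β h n * yseq 1)
                + β * ((∑ j ∈ Finset.Icc 1 (n - 1),
                      (quadA0 β h n j * yseq (j - 1) + quadA1 β h n j * yseq j
                        + quadA2 β h n j * yseq (j + 1)))
                    + quadA0 β h n n * yseq (n - 1) + quadA1 β h n n * yseq n)) →
          ∀ n, 2 ≤ n → n ≤ N →
            |y (((n : ℝ) + 1) * h) - yp (n + 1)|
              ≤ 2 * β * h * |y (h / 2) - yhalf|
                + (2 * L * (1 - α) / M)
                    * (|y ((↑(n - 2) : ℝ) * h) - yseq (n - 2)|
                      + 3 * |y ((↑(n - 1) : ℝ) * h) - yseq (n - 1)|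
                      + 3 * |y ((n : ℝ) * h) - yseq n|)
                + 6 * β * h * (∑ j ∈ Finset.Icc 1 n, |y ((j : ℝ) * h) - yseq j|)
                + C * h ^ 3 := by
  obtain ⟨h₀, hh₀, C, hC⟩ := quadratic_predictor_error_general (c := (1 - α) / M)
    (g := fun t => y₀ * Real.exp (-β * t)) (hβ ▸ div_nonneg hα.1.le (sub_pos.2 hα.2).le)
    (div_nonneg (sub_pos.2 hα.2).le hM.le) hT hf hy hfy
    (by simpa only [smul_eq_mul, mul_comm (Real.exp _)] using hint)
  refine ⟨h₀, hh₀, C, fun N h hN hh u p v hu hsch n hn hnN => mul_div_assoc (2 * L) _ M ▸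
    hC N h hN hh n hn hnN u v (p (n + 1)) (hu.trans hy0.symm) ?_⟩
  simp only [extrapolate, quadMemory, smul_eq_mul]
  linear_combination (hsch n hn hnN).1
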